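/- Let $S, M, B \in \mathbb{C}^{m\times m}$ be Hermitian matrices, $k_i$ real and $f_i$ complex, satisfying $S_{ij} - k_j^2 M_{ij} - \imath k_j B_{ij} = -2\imath k_j \overline{f_i}$ for all $i,j$. Then for all $i,j$ with $i \neq j$ and $k_i^2 \neq k_j^2$, $k_i \neq k_j$: $(k_i^2 - k_j^2) M_{ij} - \imath(k_i + k_j) B_{ij} = -2\imath (k_i f_j + k_j \overline{f_i})$. -/

import Mathlib

open Complex

theorem stmt1 {m : ℕ} (S M B : Matrix (Fin m) (Fin m) ℂ)
    (hS : S.IsHermitian) (hM : M.IsHermitian) (hB : B.IsHermitian)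
    (k : Fin m → ℝ) (f : Fin m → ℂ)
    (heq : ∀ i j, S i j - (k j : ℂ)^2 * M i j - I * (k j : ℂ) * B i j
      = -2 * I * (k j : ℂ) * (starRingEnd ℂ) (f i)) :
    ∀ i j, i ≠ j → (k i)^2 ≠ (k j)^2 → k i ≠ k j →
      ((k i : ℂ)^2 - (k j : ℂ)^2) * M i j - I * ((k i : ℂ) + (k j : ℂ)) * B i j
        = -2 * I * ((k i : ℂ) * f j + (k j : ℂ) * (starRingEnd ℂ) (f i)) := by
  intro i j _ _ _
  have hji := congrArg (starRingEnd ℂ) (heq j i)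
  simp only [map_sub, map_mul, map_pow, map_neg, map_ofNat, conj_I, conj_ofReal,
    RingHomCompTriple.comp_apply, RingHom.id_apply] at hji
  simp only [starRingEnd_apply, hS.apply i j, hM.apply i j, hB.apply i j] at hji
  have hij := heq i j
  simp only [starRingEnd_apply] at hij ⊢
  linear_combination hij - hji
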